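/- (Theorem 2, elliptic case: groundstate of the Fokker-Planck operator with strictly positive diffusion coefficient.) Let p and q be π-periodic real trigonometric polynomials of degree at most 4 (real linear combinations of 1, cos 2θ, sin 2θ, cos 4θ, sin 4θ), and assume p(θ) > 0 for all θ. Then there exists exactly one pair (ρ, C), where C ∈ ℝ and ρ : ℝ/πℤ → [0,∞) is continuously differentiable with ∫_0^π ρ(θ) dθ = 1, satisfying the once-integrated Fokker-Planck equation p ρ′ + (p′ − q) ρ = C on ℝ/πℤ. Moreover this ρ is real analytic; equivalently, the Fokker-Planck operator ℒ* ρ = ∂_θ(p ∂_θ ρ + (p′−q)ρ) has a unique nonnegative normalized groundstate. -/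

import Mathlib

/-!
Put `u = p ρ` and `r = q / p`. The integrated equation `p ρ' + (p' - q) ρ = C` becomes the scalar
linear equation `u' = r u + C`. With `R` a primitive of `r` and `G` a primitive of `exp (-R)`,
the function `w θ = exp (R θ) * (G (θ + π) - G θ)` is a positive `π`-periodic solution of
`w' = r w + (exp (-R π) - 1)`. Integrating an arbitrary periodic solution `u` with the factor
`exp (-R)` gives `u * exp (-R) = u 0 + C * G`, and comparing `θ = 0` with `θ = π` shows that `u` is
a scalar multiple of `w` (`exists_periodic_solution`). Hence `ρ` is a multiple of `w / p`,
the normalization fixes the multiple, and the equation then fixes `C`.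

Real analyticity of `w` reduces to the fact that a primitive of a real analytic function is real
analytic (`analyticAt_of_hasDerivAt`), proved by integrating the power series termwise.
-/

open MeasureTheory Real Set

namespace FokkerPlanck6

/-- A real trigonometric polynomial of degree at most 4 on `S¹_π = ℝ/πℤ`, i.e. a real
linear combination of `1, cos 2θ, sin 2θ, cos 4θ, sin 4θ`. -/
def IsTrigPoly4 (p : ℝ → ℝ) : Prop :=
  ∃ c : Fin 5 → ℝ, ∀ θ : ℝ,
    p θ = c 0 + c 1 * Real.cos (2 * θ) + c 2 * Real.sin (2 * θ) +
      c 3 * Real.cos (4 * θ) + c 4 * Real.sin (4 * θ)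

/-- The groundstate property: `ρ` is a `C¹`, nonnegative, `π`-periodic, normalized
solution of the once-integrated Fokker-Planck equation `p ρ' + (p' - q) ρ = C`. -/
def IsGroundstate (p q : ℝ → ℝ) (ρ : ℝ → ℝ) (C : ℝ) : Prop :=
  ContDiff ℝ 1 ρ ∧ Function.Periodic ρ π ∧ (∀ θ, 0 ≤ ρ θ) ∧
    (∫ θ in (0:ℝ)..π, ρ θ) = 1 ∧
    ∀ θ, p θ * deriv ρ θ + (deriv p θ - q θ) * ρ θ = C

/-- A primitive of a real analytic function is real analytic: the termwise integral of the power
series of `f` converges, has derivative `f`, and so differs from `F` by a constant. -/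
lemma analyticAt_of_hasDerivAt {F f : ℝ → ℝ} {x : ℝ} (hf : AnalyticAt ℝ f x)
    (hF : ∀ z, HasDerivAt F (f z) z) : AnalyticAt ℝ F x := by
  obtain ⟨p, r, hr⟩ := hf
  let c : ℕ → ℝ := fun n => p.coeff (n - 1) / n
  let P : FormalMultilinearSeries ℝ ℝ ℝ := FormalMultilinearSeries.ofScalars ℝ c
  obtain ⟨s, hs0, hsr⟩ := ENNReal.lt_iff_exists_nnreal_btwn.1 hr.r_pos
  have hs0' : 0 < s := by exact_mod_cast hs0
  obtain ⟨B, hB0, hB⟩ := p.norm_mul_pow_le_of_lt_radius (lt_of_lt_of_le hsr hr.r_le)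
  have hPs : (s : ENNReal) ≤ P.radius := by
    apply P.le_radius_of_bound (B * s)
    intro n
    have hn : ‖P n‖ = ‖c n‖ := by
      simp [P]
    rw [hn]
    rcases n with _ | n
    · simp [c]; positivity
    · have h1 : ‖c (n + 1)‖ ≤ ‖p n‖ := by
        simp only [c, Nat.add_sub_cancel, norm_div]
        rw [FormalMultilinearSeries.norm_apply_eq_norm_coef]
        apply div_le_self (norm_nonneg _)
        rw [Real.norm_eq_abs, abs_of_nonneg (by positivity)]
        push_cast
        linarith [(Nat.cast_nonneg n : (0 : ℝ) ≤ n)]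
      calc ‖c (n + 1)‖ * (s : ℝ) ^ (n + 1) ≤ ‖p n‖ * (s : ℝ) ^ (n + 1) := by gcongr
        _ = (‖p n‖ * (s : ℝ) ^ n) * s := by ring
        _ ≤ B * s := by gcongr; exact hB n
  have hder : ∀ y : ℝ, |y| < s → HasDerivAt P.sum (f (x + y)) y := by
    intro y hy
    have hy' : ‖y‖ₑ < (s : ENNReal) := by
      rw [enorm_eq_nnnorm]
      exact_mod_cast hy
    have h1 := (P.hasFDerivAt_sum (lt_of_lt_of_le hy' hPs)).hasDerivAt
    have h2 : HasSum (fun n => P.derivSeries n (fun _ => y)) (P.derivSeries.sum y) := by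
      apply P.derivSeries.hasSum
      simpa [edist_zero_right] using
        lt_of_lt_of_le hy' (hPs.trans P.radius_le_radius_derivSeries)
    have h3 : HasSum (fun n => (P.derivSeries n (fun _ => y)) (1 : ℝ))
        (P.derivSeries.sum y 1) :=
      h2.mapL (ContinuousLinearMap.apply ℝ ℝ (1 : ℝ))
    have h4 : HasSum (fun n => p n (fun _ => y)) (f (x + y)) := by
      apply hr.hasSum
      simpa [edist_zero_right] using lt_trans hy' hsr
    have h5 : ∀ n, (P.derivSeries n (fun _ => y)) (1 : ℝ) = p n (fun _ => y) := by
      intro n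
      rw [FormalMultilinearSeries.apply_eq_pow_smul_coeff,
        FormalMultilinearSeries.apply_eq_pow_smul_coeff]
      have h6 : P.coeff (n + 1) = c (n + 1) := by
        simp [P, FormalMultilinearSeries.coeff_ofScalars]
      rw [smul_apply, FormalMultilinearSeries.derivSeries_coeff_one, h6]
      have : (n + 1 : ℝ) ≠ 0 := by positivity
      simp only [c, Nat.add_sub_cancel, nsmul_eq_mul]
      push_cast
      field_simp
    simp only [h5] at h3
    rwa [h3.unique h4] at h1
  have hP0 : HasFPowerSeriesOnBall P.sum P 0 P.radius :=
    P.hasFPowerSeriesOnBall (lt_of_lt_of_le hs0 hPs)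
  have hPan : AnalyticAt ℝ (fun z => P.sum (z - x)) x := by
    apply AnalyticAt.fun_comp (g := P.sum)
    · simpa using hP0.analyticAt
    · fun_prop
  have hD : ∀ z ∈ Metric.ball x (s : ℝ),
      HasDerivAt (fun z => F z - P.sum (z - x)) 0 z := by
    intro z hz
    have h1 := hder (z - x) (by simpa [Real.dist_eq] using hz)
    rw [add_sub_cancel] at h1
    have h2 : HasDerivAt (fun z => P.sum (z - x)) (f z) z := by
      simpa using h1.comp_sub_const z x
    exact ((hF z).fun_sub h2).congr_deriv (sub_self _)
  have hconst : ∀ z ∈ Metric.ball x (s : ℝ), F z - P.sum (z - x) = F x - P.sum (x - x) := by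
    intro z hz
    exact Metric.isOpen_ball.is_const_of_deriv_eq_zero (convex_ball x _).isPreconnected
      (fun z hz => (hD z hz).differentiableAt.differentiableWithinAt)
      (fun z hz => (hD z hz).deriv) hz (Metric.mem_ball_self (by exact_mod_cast hs0'))
  refine (hPan.add (analyticAt_const (v := F x - P.sum (x - x)))).congr ?_
  filter_upwards [Metric.ball_mem_nhds x (show (0 : ℝ) < s by exact_mod_cast hs0')] with z hz
  have := hconst z hz
  simp only [Pi.add_apply]
  linarith

/-- Up to scaling, `w' = r w + D` has exactly one periodic solution (with `D` allowed to vary),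
and it can be taken positive. -/
lemma exists_periodic_solution {r : ℝ → ℝ} (hr : ∀ θ, AnalyticAt ℝ r θ)
    (hper : Function.Periodic r π) :
    ∃ (w : ℝ → ℝ) (D : ℝ), (∀ θ, AnalyticAt ℝ w θ) ∧ Function.Periodic w π ∧ (∀ θ, 0 < w θ) ∧
      (∀ θ, HasDerivAt w (r θ * w θ + D) θ) ∧
      ∀ (u : ℝ → ℝ) (C : ℝ), Function.Periodic u π →
        (∀ θ, HasDerivAt u (r θ * u θ + C) θ) → ∃ k, ∀ θ, u θ = k * w θ := by
  have hrc : Continuous r := continuous_iff_continuousAt.2 fun θ => (hr θ).continuousAt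
  obtain ⟨R, hR0, hR⟩ : ∃ R : ℝ → ℝ, R 0 = 0 ∧ ∀ θ, HasDerivAt R (r θ) θ :=
    ⟨fun θ => ∫ t in (0 : ℝ)..θ, r t, by simp, fun θ => hrc.integral_hasStrictDerivAt 0 θ
      |>.hasDerivAt⟩
  have hRan : ∀ θ, AnalyticAt ℝ R θ := fun θ => analyticAt_of_hasDerivAt (hr θ) hR
  have hRc : Continuous R := continuous_iff_continuousAt.2 fun θ => (hRan θ).continuousAt
  have hec : Continuous fun θ => Real.exp (-R θ) := by fun_prop
  obtain ⟨G, hG0, hG⟩ : ∃ G : ℝ → ℝ, G 0 = 0 ∧ ∀ θ, HasDerivAt G (Real.exp (-R θ)) θ :=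
    ⟨fun θ => ∫ t in (0 : ℝ)..θ, Real.exp (-R t), by simp,
      fun θ => hec.integral_hasStrictDerivAt 0 θ |>.hasDerivAt⟩
  have hGan : ∀ θ, AnalyticAt ℝ G θ := fun θ =>
    analyticAt_of_hasDerivAt (f := fun θ => Real.exp (-R θ)) ((hRan θ).neg.rexp) hG
  have hGmono : StrictMono G := strictMono_of_deriv_pos fun θ => by
    rw [(hG θ).deriv]; positivity
  have hconst : ∀ f : ℝ → ℝ, (∀ θ, HasDerivAt f 0 θ) → ∀ θ, f θ = f 0 := fun f hf θ =>
    is_const_of_deriv_eq_zero (fun t => (hf t).differentiableAt) (fun t => (hf t).deriv) θ 0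
  have hRshift : ∀ θ, R (θ + π) = R θ + R π := by
    intro θ
    have := hconst (fun θ => R (θ + π) - R θ) (fun t => by
      have h := ((hR (t + π)).comp_add_const t π).sub (hR t)
      rw [hper t, sub_self] at h
      exact h) θ
    simp only [zero_add, hR0] at this
    linarith
  have hGshift : ∀ θ, G (θ + π) = G π + Real.exp (-R π) * G θ := by
    intro θ
    have := hconst (fun θ => G (θ + π) - Real.exp (-R π) * G θ) (fun t => by
      have h := ((hG (t + π)).comp_add_const t π).sub ((hG t).const_mul (Real.exp (-R π)))
      rw [hRshift t, ← Real.exp_add, neg_add, add_comm (-R t), sub_self] at h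
      exact h) θ
    simp only [zero_add, hG0] at this
    linarith
  have hGpi : 0 < G π := hG0 ▸ hGmono Real.pi_pos
  refine ⟨fun θ => Real.exp (R θ) * (G (θ + π) - G θ), Real.exp (-R π) - 1, ?_, ?_, ?_, ?_, ?_⟩
  · intro θ
    have h1 : AnalyticAt ℝ (fun θ => G (θ + π)) θ :=
      AnalyticAt.fun_comp (g := G) (hGan _) (by fun_prop)
    exact (hRan θ).rexp.mul (h1.sub (hGan θ))
  · intro θ
    simp only
    rw [hGshift (θ + π), hGshift θ, hRshift, Real.exp_add]
    have : Real.exp (R π) * Real.exp (-R π) = 1 := by rw [← Real.exp_add]; simp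
    linear_combination (Real.exp (R θ) * (G π + Real.exp (-R π) * G θ - G θ)) * this
  · intro θ
    have := hGmono (show θ < θ + π by linarith [Real.pi_pos])
    have h2 : 0 < G (θ + π) - G θ := by linarith
    positivity
  · intro θ
    have h := (hR θ).exp.mul (((hG (θ + π)).comp_add_const θ π).sub (hG θ))
    refine h.congr_deriv ?_
    rw [hRshift, neg_add, Real.exp_add]
    have : Real.exp (R θ) * Real.exp (-R θ) = 1 := by rw [← Real.exp_add]; simp
    simp only [Pi.sub_apply]
    linear_combination (Real.exp (-R π) - 1) * this
  · intro u C hu hud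
    have hkey : ∀ θ, u θ * Real.exp (-R θ) - C * G θ = u 0 := by
      intro θ
      have := hconst (fun θ => u θ * Real.exp (-R θ) - C * G θ) (fun t => by
        refine (((hud t).mul (hR t).neg.exp).sub ((hG t).const_mul C)).congr_deriv ?_
        simp only [Pi.neg_apply]
        ring) θ
      simpa [hR0, hG0] using this
    have hpi := hkey π
    have hu0 : u π = u 0 := by simpa using hu 0
    rw [hu0] at hpi
    refine ⟨u 0 / G π, fun θ => ?_⟩
    have h := hkey θ
    have : Real.exp (R θ) * Real.exp (-R θ) = 1 := by rw [← Real.exp_add]; simp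
    simp only [hGshift]
    field_simp
    linear_combination (-(u θ) * G π) * this + Real.exp (R θ) * G π * h
      - Real.exp (R θ) * G θ * hpi

lemma IsTrigPoly4.analyticAt {p : ℝ → ℝ} (hp : IsTrigPoly4 p) (θ : ℝ) : AnalyticAt ℝ p θ := by
  obtain ⟨c, hc⟩ := hp
  rw [funext hc]
  fun_prop

lemma IsTrigPoly4.periodic {p : ℝ → ℝ} (hp : IsTrigPoly4 p) : Function.Periodic p π := by
  obtain ⟨c, hc⟩ := hp
  intro θ
  have h4 : 4 * (θ + π) = 4 * θ + 2 * π + 2 * π := by ring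
  rw [hc, hc, h4, mul_add]
  simp only [Real.cos_add_two_pi, Real.sin_add_two_pi]

/-- **Theorem 2 (elliptic case).**  If `p, q` are `π`-periodic trigonometric
polynomials of degree `≤ 4` and `p > 0`, then there is exactly one pair `(ρ, C)` with
`ρ : ℝ/πℤ → [0,∞)` of class `C¹` and normalized solving `p ρ' + (p'-q)ρ = C`; moreover
this `ρ` is real analytic. -/
theorem groundstate_elliptic (p q : ℝ → ℝ)
    (hp : IsTrigPoly4 p) (hq : IsTrigPoly4 q)
    (hppos : ∀ θ, 0 < p θ) :
    (∃! z : (ℝ → ℝ) × ℝ, IsGroundstate p q z.1 z.2) ∧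
    (∀ ρ C, IsGroundstate p q ρ C → ∀ θ : ℝ, AnalyticAt ℝ ρ θ) := by
  have hpne : ∀ θ, p θ ≠ 0 := fun θ => (hppos θ).ne'
  have hpd : ∀ θ, HasDerivAt p (deriv p θ) θ := fun θ =>
    (hp.analyticAt θ).differentiableAt.hasDerivAt
  obtain ⟨w, D, hwan, hwper, hwpos, hwd, hwuniq⟩ :=
    exists_periodic_solution (r := fun θ => q θ / p θ)
      (fun θ => (hq.analyticAt θ).div (hp.analyticAt θ) (hpne θ))
      (fun θ => by simp only [hq.periodic θ, hp.periodic θ])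
  have hman : ∀ θ, AnalyticAt ℝ (fun θ => w θ / p θ) θ := fun θ =>
    (hwan θ).div (hp.analyticAt θ) (hpne θ)
  have hmc : Continuous (fun θ => w θ / p θ) :=
    continuous_iff_continuousAt.2 fun θ => (hman θ).continuousAt
  obtain ⟨N, hN⟩ : ∃ N, N = ∫ θ in (0:ℝ)..π, w θ / p θ := ⟨_, rfl⟩
  have hNpos : 0 < N := by
    rw [hN]
    exact intervalIntegral.intervalIntegral_pos_of_pos (hmc.intervalIntegrable _ _)
      (fun θ => div_pos (hwpos θ) (hppos θ)) Real.pi_pos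
  have hform : ∀ ρ C, IsGroundstate p q ρ C → ρ = fun θ => N⁻¹ * (w θ / p θ) := by
    rintro ρ C ⟨hC1, hρper, -, hint, heq⟩
    have hρd : ∀ θ, HasDerivAt ρ (deriv ρ θ) θ := fun θ =>
      (hC1.differentiable one_ne_zero θ).hasDerivAt
    obtain ⟨k, hk⟩ := hwuniq (fun θ => p θ * ρ θ) C
      (fun θ => by simp only [hp.periodic θ, hρper θ])
      (fun θ => by
        refine ((hpd θ).mul (hρd θ)).congr_deriv ?_
        rw [← heq θ]
        have := hpne θ
        field_simp
        ring)
    have hρk : ∀ θ, ρ θ = k * (w θ / p θ) := by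
      intro θ
      have := hpne θ
      have := hk θ
      field_simp
      linarith
    have hkN : k * N = 1 := by
      rw [hN, ← intervalIntegral.integral_const_mul, ← hint]
      simp only [hρk]
    funext θ
    rw [hρk θ, eq_inv_of_mul_eq_one_left hkN]
  refine ⟨⟨(fun θ => N⁻¹ * (w θ / p θ), N⁻¹ * D), ⟨?_, ?_, ?_, ?_, ?_⟩, ?_⟩, ?_⟩
  · exact contDiff_iff_contDiffAt.2 fun θ => (analyticAt_const.mul (hman θ)).contDiffAt
  · intro θ
    simp only [hwper θ, hp.periodic θ]
  · intro θ
    have := hwpos θ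
    have := hppos θ
    positivity
  · simp only [intervalIntegral.integral_const_mul, ← hN]
    exact inv_mul_cancel₀ hNpos.ne'
  · intro θ
    have h := (((hwd θ).div (hpd θ) (hpne θ)).const_mul N⁻¹).deriv
    simp only [Pi.div_apply] at h
    simp only [h]
    have := hpne θ
    field_simp
    ring
  · rintro ⟨ρ, C⟩ h
    have hρ := hform ρ C h
    have h2 := h.2.2.2.2 0
    simp only at h2 hρ
    refine Prod.ext hρ ?_
    simp only
    rw [← h2, hρ]
    have h := (((hwd 0).div (hpd 0) (hpne 0)).const_mul N⁻¹).deriv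
    simp only [Pi.div_apply] at h
    simp only [h]
    have := hpne 0
    field_simp
    ring
  · intro ρ C h θ
    rw [hform ρ C h]
    exact analyticAt_const.mul (hman θ)

end FokkerPlanck6
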